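/- Let S_0 = I and let S_1, ..., S_K be N×N real symmetric matrices, let C be the T×T cyclic-shift (circulant) matrix, and let h_0, ..., h_K be real filter coefficients. Suppose v ∈ ℂ^N is a simultaneous eigenvector of the matrices S_1, ..., S_K with S_k v = λ_k v for each k = 1, ..., K (and set λ_0 = 1), and suppose u ∈ ℂ^T satisfies Cᵀ u = e^{jω} u for some ω ∈ ℝ. Then the generalized space-time graph filter applied to the rank-one space-time signal X = v uᵀ satisfies Σ_{k=0}^K h_k S_k S_{k-1} ⋯ S_1 S_0 X C^k = h(λ, ω) · v uᵀ, where h(λ, ω) = Σ_{k=0}^K h_k e^{jkω} ∏_{κ=0}^{k} λ_κ is the generalized frequency response of the filter. -/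

import Mathlib

open Matrix

/-- The `T × T` cyclic (one-step time) shift matrix: `C i j = 1` iff `j = i + 1 (mod T)`. -/
def cyclicShift (T : ℕ) [NeZero T] (α : Type*) [Zero α] [One α] : Matrix (Fin T) (Fin T) α :=
  Matrix.of fun i j => if j = i + 1 then 1 else 0

/-- `prodSeq S k = S_k * S_{k-1} * ⋯ * S_1 * S_0`, the backward product of a
sequence of graph shift operators. -/
def prodSeq {N : ℕ} {α : Type*} [NonAssocSemiring α] (S : ℕ → Matrix (Fin N) (Fin N) α) :
    ℕ → Matrix (Fin N) (Fin N) α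
  | 0 => S 0
  | k + 1 => S (k + 1) * prodSeq S k

section Eigenvectors

variable {m n R : Type*} [Fintype m] [Fintype n]

theorem vecMul_pow_of_vecMul_eq_smul [DecidableEq n] [Semiring R] {C : Matrix n n R} {u : n → R}
    {μ : R} (hu : u ᵥ* C = μ • u) (k : ℕ) : u ᵥ* C ^ k = μ ^ k • u := by
  induction k with
  | zero => simp
  | succ k ih => rw [pow_succ, ← vecMul_vecMul, ih, smul_vecMul, hu, smul_smul, ← pow_succ]

theorem prodSeq_mulVec_of_mulVec_eq_smul [CommSemiring R] {N k : ℕ}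
    {S : ℕ → Matrix (Fin N) (Fin N) R} {v : Fin N → R} {lam : ℕ → R}
    (hv : ∀ i ≤ k, S i *ᵥ v = lam i • v) :
    prodSeq S k *ᵥ v = (∏ i ∈ Finset.range (k + 1), lam i) • v := by
  induction k with
  | zero => simpa [prodSeq] using hv 0 le_rfl
  | succ k ih =>
    rw [prodSeq, ← mulVec_mulVec, ih fun i hi => hv i (Nat.le_succ_of_le hi), mulVec_smul,
      hv (k + 1) le_rfl, smul_smul, ← Finset.prod_range_succ]

theorem mul_vecMulVec_mul_of_eq_smul [CommSemiring R] {A : Matrix m m R} {B : Matrix n n R}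
    {v : m → R} {u : n → R} {a b : R} (hv : A *ᵥ v = a • v) (hu : u ᵥ* B = b • u) :
    A * vecMulVec v u * B = (a * b) • vecMulVec v u := by
  rw [mul_vecMulVec, vecMulVec_mul, hv, hu, smul_vecMulVec, vecMulVec_smul, smul_smul]

theorem generalized_stgf_frequency_response_general [DecidableEq n] [CommSemiring R] {N K : ℕ}
    {S : ℕ → Matrix (Fin N) (Fin N) R} {C : Matrix n n R} (h : ℕ → R)
    {v : Fin N → R} {u : n → R} {lam : ℕ → R} {μ : R}
    (hv : ∀ k ≤ K, S k *ᵥ v = lam k • v) (hu : Cᵀ *ᵥ u = μ • u) :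
    ∑ k ∈ Finset.range (K + 1), h k • (prodSeq S k * vecMulVec v u * C ^ k)
      = (∑ k ∈ Finset.range (K + 1), h k * μ ^ k * ∏ κ ∈ Finset.range (k + 1), lam κ) •
        vecMulVec v u := by
  rw [mulVec_transpose] at hu
  rw [Finset.sum_smul]
  refine Finset.sum_congr rfl fun k hk => ?_
  have hS : prodSeq S k *ᵥ v = (∏ κ ∈ Finset.range (k + 1), lam κ) • v :=
    prodSeq_mulVec_of_mulVec_eq_smul fun i hi => hv i (hi.trans (Finset.mem_range_succ_iff.mp hk))
  have hC : u ᵥ* C ^ k = μ ^ k • u := vecMul_pow_of_vecMul_eq_smul hu k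
  rw [mul_vecMulVec_mul_of_eq_smul hS hC, smul_smul, mul_assoc, mul_comm (μ ^ k)]

end Eigenvectors

theorem exp_I_mul_natCast_mul (k : ℕ) (z : ℂ) :
    Complex.exp (Complex.I * k * z) = Complex.exp (Complex.I * z) ^ k := by
  rw [mul_right_comm, mul_comm, Complex.exp_nat_mul]

/-- **Generalized STGF frequency response.**
Let `S 0 = I` and let `S 1, …, S K` be `N × N` real symmetric matrices, `C` the `T × T`
cyclic-shift matrix, and `h 0, …, h K` real filter coefficients.  If `v ∈ ℂ^N` is a
simultaneous eigenvector with `S k • v = λ k • v` for `k = 1, …, K` (and `λ 0 = 1`), and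
`u ∈ ℂ^T` satisfies `Cᵀ u = e^{jω} u`, then the generalized space-time graph filter applied
to the rank-one signal `X = v uᵀ` equals `h(λ, ω) • v uᵀ` where
`h(λ, ω) = ∑_{k=0}^K h k e^{jkω} ∏_{κ=0}^{k} λ κ`. -/
theorem generalized_stgf_frequency_response
    {N T K : ℕ} [NeZero T]
    (S : ℕ → Matrix (Fin N) (Fin N) ℝ)
    (hS0 : S 0 = 1)
    (hSsymm : ∀ k, 1 ≤ k → k ≤ K → (S k)ᵀ = S k)
    (h : ℕ → ℝ) (ω : ℝ)
    (v : Fin N → ℂ) (u : Fin T → ℂ)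
    (lam : ℕ → ℂ) (hlam0 : lam 0 = 1)
    (hv : ∀ k, 1 ≤ k → k ≤ K → ((S k).map (Complex.ofReal ·)) *ᵥ v = lam k • v)
    (hu : (cyclicShift T ℂ)ᵀ *ᵥ u = Complex.exp (Complex.I * ω) • u) :
    ∑ k ∈ Finset.range (K + 1),
        (h k : ℂ) • (prodSeq (fun κ => (S κ).map (Complex.ofReal ·)) k *
          Matrix.vecMulVec v u * (cyclicShift T ℂ) ^ k)
      = (∑ k ∈ Finset.range (K + 1),
          (h k : ℂ) * Complex.exp (Complex.I * k * ω) * ∏ κ ∈ Finset.range (k + 1), lam κ) •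
        Matrix.vecMulVec v u := by
  have hv_le : ∀ k ≤ K, (S k).map (Complex.ofReal ·) *ᵥ v = lam k • v
    | 0, _ => by simp [hS0, hlam0]
    | k + 1, hk => hv (k + 1) k.succ_pos hk
  simpa only [exp_I_mul_natCast_mul] using
    generalized_stgf_frequency_response_general (fun k => (h k : ℂ)) hv_le hu
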